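/- (Main Lemma.) Let A ⊆ G = 𝔽₂ⁿ, N = 2ⁿ, be a set that is a union of ε·N pairwise element-disjoint triangles. Let H ≤ G be a subgroup with index T = |G/H|. If A contains fewer than (ε³/(64T²))·N² triangles (not necessarily disjoint), then there is a subgroup H' ≤ H such that: (1) F_A(G, H') ≥ F_A(G, H) + ε/3600; and (2) |G/H'| ≤ c^T, where c = 2^{2·log_{1+ε²/16}(4/ε)}. -/

import Mathlib

open scoped Classical BigOperators

noncomputable section

/-- The group `G = 𝔽₂ⁿ`. -/
abbrev G (n : ℕ) : Type := Fin n → ZMod 2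

/-- The coset `H + g` (note that `-g = g` in `𝔽₂ⁿ`). -/
def coset {n : ℕ} (H : AddSubgroup (G n)) (g : G n) : Set (G n) := {x | x + g ∈ H}

/-- The entropy function `f(x) = x log x` (with `f 0 = 0`). -/
def ent (x : ℝ) : ℝ := x * Real.log x

/-- The density of `A` on the coset `H + g`. -/
def dens {n : ℕ} (A : Set (G n)) (H : AddSubgroup (G n)) (g : G n) : ℝ :=
  (Nat.card ↥(A ∩ coset H g) : ℝ) / (Nat.card ↥H : ℝ)

/-- Mean entropy `F_A(G, H)` of partitioning `G` into cosets of `H`. -/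
def meanEntG {n : ℕ} (A : Set (G n)) (H : AddSubgroup (G n)) : ℝ :=
  (∑ g : G n, ent (dens A H g)) / (Fintype.card (G n) : ℝ)

/-- Mean entropy `F_A(H + g, H')` of partitioning the coset `H + g` into cosets of `H'`. -/
def meanEntCoset {n : ℕ} (A : Set (G n)) (H H' : AddSubgroup (G n)) (g : G n) : ℝ :=
  (∑ g₁ : ↥H, ent (dens A H' (g + ↑g₁))) / (Nat.card ↥H : ℝ)

/-- The standard bilinear form on `𝔽₂ⁿ`. -/
def dotp {n : ℕ} (x y : G n) : ZMod 2 := ∑ i, x i * y i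

/-- The character value `(-1)^{⟨x, y⟩}`. -/
def chi {n : ℕ} (x y : G n) : ℝ := if dotp x y = 0 then 1 else -1

/-- Fourier coefficient `f̂_H^g(η) = E_{x ∈ H} [f(x + g) · (-1)^{⟨x, η⟩}]`. -/
def fCoeff {n : ℕ} (H : AddSubgroup (G n)) (g : G n) (f : G n → ℝ) (η : G n) : ℝ :=
  (∑ x : ↥H, f (↑x + g) * chi ↑x η) / (Nat.card ↥H : ℝ)

/-- `f` is `ρ`-superregular on `H + g`: every Fourier coefficient at a character that is
nontrivial on `H` is at most `ρ` times the zeroth coefficient in absolute value. -/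
def SuperregularOn {n : ℕ} (H : AddSubgroup (G n)) (g : G n) (ρ : ℝ) (f : G n → ℝ) : Prop :=
  ∀ η : G n, (∃ x ∈ H, dotp x η ≠ 0) →
    |fCoeff H g f η| ≤ ρ * fCoeff H g f 0

/-- `H'` `(α, β, k)`-shatters `A` on `H + g`. -/
def Shatters {n : ℕ} (H' H : AddSubgroup (G n)) (A : Set (G n)) (g : G n)
    (α β k : ℝ) : Prop :=
  (Nat.card ↥H : ℝ) / (Nat.card ↥H' : ℝ) ≤ (2 : ℝ) ^ k ∧
  α ≤ (Nat.card {g' : ↥H //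
        (Nat.card ↥(A ∩ coset H' (g + ↑g')) : ℝ) ≤ β * dens A H g * (Nat.card ↥H' : ℝ)} : ℝ) /
      (Nat.card ↥H : ℝ)

/-- Number of triangles `(a, b, c)`, `a + b + c = 0`, with `a ∈ S₁`, `b ∈ S₂`, `c ∈ S₃`. -/
def triBetween {n : ℕ} (S₁ S₂ S₃ : Set (G n)) : ℕ :=
  Nat.card {p : G n × G n × G n // p.1 ∈ S₁ ∧ p.2.1 ∈ S₂ ∧ p.2.2 ∈ S₃ ∧ p.1 + p.2.1 + p.2.2 = 0}

/-- Number of triangles in `A`. -/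
def triCount {n : ℕ} (A : Set (G n)) : ℕ := triBetween A A A

/-- The annihilator of `K`: characters trivial on `K`. -/
def ann {n : ℕ} (K : AddSubgroup (G n)) : AddSubgroup (G n) where
  carrier := {η | ∀ x ∈ K, dotp x η = 0}
  zero_mem' := by intro x _; simp [dotp]
  add_mem' := by
    intro a b ha hb x hx
    have h : dotp x (a + b) = dotp x a + dotp x b := by
      simp [dotp, mul_add, Finset.sum_add_distrib]
    rw [h, ha x hx, hb x hx, add_zero]
  neg_mem' := by
    intro a ha x hx
    have h : dotp x (-a) = -dotp x a := by
      simp [dotp]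
    rw [h, ha x hx, neg_zero]

/-- Average of `f` over the coset `v + H'`. -/
def fbar {n : ℕ} (H' : AddSubgroup (G n)) (f : G n → ℝ) (v : G n) : ℝ :=
  (∑ y : ↥H', f (v + ↑y)) / (Nat.card ↥H' : ℝ)

/-- Tower function: `tower 0 = 1`, `tower (i+1) = 2 ^ tower i`. -/
def tower : ℕ → ℕ
  | 0 => 1
  | k + 1 => 2 ^ tower k

/-- `A` is `ε`-far from triangle-free: at least `ε N` elements must be removed from `A`
to destroy all triangles. -/
def FarFromTriangleFree {n : ℕ} (A : Set (G n)) (ε : ℝ) : Prop :=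
  ∀ B ⊆ A, (∀ x ∈ B, ∀ y ∈ B, ∀ z ∈ B, x + y + z ≠ 0) →
    ε * 2 ^ n ≤ (Nat.card ↥(A \ B) : ℝ)

/-- The set of elements of a triangle. -/
def elems {n : ℕ} (p : G n × G n × G n) : Set (G n) := {p.1, p.2.1, p.2.2}

/-!
Passing to the heavier half of a subgroup whenever a Fourier coefficient exceeds `ρ` times the mean
multiplies the density by `1 + ρ`, so after boundedly many halvings one reaches a superregular piece
of `A` on a coset of some `K ≤ H`. Exhausting `A` on `H + g₁` by such pieces, one of them lies, up
to a factor `2`, in as few triangles per point as the average. By the Fourier count, triangles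
through a superregular piece are as many as if `A` were constant on each coset of `K`. Hence if
`g₁ + g₂ + g₃ = 0`, all three cosets `H + gᵢ` are dense and there are few triangles between them,
then `A` must be sparse on many cosets of `K` inside `H + g₂` or `H + g₃`: `K` shatters one of them.
Comparing `x * log x` with its tangent at the mean density turns shattering into an entropy gain.

Each of the disjoint triangles has a vertex in a sparse coset or in a shattered one. Sparse cosets
hold at most `3/4 * ε * N` elements, so shattered cosets hold at least `ε / 4 * N` elements of `A`.
Intersecting the shattering subgroups, one for each coset of `H`, collects all the gains at once,
because refining a partition cannot decrease the mean entropy.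
-/

section Averages

variable {n : ℕ} (A : Set (G n)) (H : AddSubgroup (G n)) (u v w : G n → ℝ) (g : G n)

lemma sum_indicator_one {α : Type*} [Fintype α] (s : Set α) :
    ∑ x, s.indicator (1 : α → ℝ) x = Nat.card s := by
  simp only [Set.indicator_apply, Pi.one_apply, Finset.sum_boole, Nat.card_eq_fintype_card,
    Fintype.card_subtype]

lemma natCard_pos : (0 : ℝ) < Nat.card H := by
  exact_mod_cast Nat.card_pos

lemma natCard_mul_index : (Nat.card H : ℝ) * H.index = 2 ^ n := by
  exact_mod_cast H.card_mul_index.trans (by simp)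

lemma add_mem_coset {H} {g h : G n} (hh : h ∈ H) : g + h ∈ coset H g := by
  change g + h + g ∈ H
  rwa [add_right_comm, ZModModule.add_self, zero_add]

lemma add_mem_coset_iff {H} {g x h : G n} (hh : h ∈ H) : x + h ∈ coset H g ↔ x ∈ coset H g := by
  change x + h + g ∈ H ↔ x + g ∈ H
  rw [add_right_comm, H.add_mem_cancel_right hh]

lemma mem_coset_self : g ∈ coset H g := by
  simpa using add_mem_coset (g := g) H.zero_mem

lemma sum_indicator_coset :
    ∑ x, (coset H g).indicator w x = Nat.card H * fbar H w g := by
  have mem_iff (x : G n) : g + x ∈ coset H g ↔ x ∈ H := by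
    change g + x + g ∈ H ↔ x ∈ H
    rw [add_right_comm, ZModModule.add_self, zero_add]
  rw [fbar, mul_div_cancel₀ _ (natCard_pos H).ne', ← Equiv.sum_comp (Equiv.addLeft g)]
  simp only [Equiv.coe_addLeft, Set.indicator_apply, mem_iff, ← Finset.sum_filter]
  exact Finset.sum_subtype _ (by simp) _

lemma sum_indicator_coset_mul :
    ∑ x, (coset H g).indicator u x * v x = Nat.card H * fbar H (fun x ↦ u x * v x) g := by
  simp only [← sum_indicator_coset, Set.indicator_mul_left]

lemma dens_eq_fbar : dens A H g = fbar H (A.indicator 1) g := by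
  rw [dens, div_eq_iff (natCard_pos H).ne', mul_comm, ← sum_indicator_coset,
    Set.indicator_indicator, sum_indicator_one, Set.inter_comm]

variable {A H g} in
lemma natCard_eq_mul_dens (hA : A ⊆ coset H g) : (Nat.card A : ℝ) = Nat.card H * dens A H g := by
  rw [dens, Set.inter_eq_left.2 hA, mul_div_cancel₀ _ (natCard_pos H).ne']

lemma fbar_const (c : ℝ) : fbar H (fun _ ↦ c) g = c := by
  simp [fbar]

lemma fbar_add : fbar H (fun x ↦ u x + v x) g = fbar H u g + fbar H v g := by
  simp only [fbar, Finset.sum_add_distrib, add_div]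

lemma fbar_sub : fbar H (fun x ↦ u x - v x) g = fbar H u g - fbar H v g := by
  simp only [fbar, Finset.sum_sub_distrib, sub_div]

lemma fbar_const_mul (c : ℝ) : fbar H (fun x ↦ c * u x) g = c * fbar H u g := by
  simp only [fbar, ← Finset.mul_sum, mul_div_assoc]

variable {u v g} in
lemma fbar_mono (h : ∀ x ∈ coset H g, u x ≤ v x) : fbar H u g ≤ fbar H v g :=
  div_le_div_of_nonneg_right (Finset.sum_le_sum fun k _ ↦ h _ (add_mem_coset k.2))
    (natCard_pos H).le

variable {u v g} in
lemma fbar_congr (h : ∀ x ∈ coset H g, u x = v x) : fbar H u g = fbar H v g :=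
  le_antisymm (fbar_mono H fun x hx ↦ (h x hx).le) (fbar_mono H fun x hx ↦ (h x hx).ge)

lemma fbar_comp_add_right (s : G n) : fbar H (fun x ↦ w (x + s)) g = fbar H w (g + s) := by
  simp only [fbar, add_right_comm]

variable {H} in
lemma fbar_add_of_mem {h : G n} (hh : h ∈ H) : fbar H w (g + h) = fbar H w g := by
  rw [fbar, fbar, ← Equiv.sum_comp (Equiv.addLeft (⟨h, hh⟩ : H)) fun y ↦ w (g + y)]
  simp [add_assoc]

variable {H} in
lemma dens_add_of_mem {h : G n} (hh : h ∈ H) : dens A H (g + h) = dens A H g := by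
  rw [dens_eq_fbar, dens_eq_fbar, fbar_add_of_mem _ _ hh]

lemma dens_nonneg : 0 ≤ dens A H g := by
  unfold dens; positivity

lemma dens_le_one : dens A H g ≤ 1 := by
  rw [dens_eq_fbar, ← fbar_const H g 1]
  exact fbar_mono H fun x _ ↦ Set.indicator_le_self' (fun _ _ ↦ zero_le_one) x

variable {H} in
lemma sum_mul_fbar (hu : ∀ x, ∀ h ∈ H, u (x + h) = u x) :
    ∑ x, u x * fbar H w x = ∑ x, u x * w x := by
  have sum_shift (h : H) : ∑ x, u x * w (x + h) = ∑ x, u x * w x := by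
    rw [← Equiv.sum_comp (Equiv.addRight (h : G n)) fun x ↦ u x * w x]
    simp [hu _ _ h.2]
  simp only [fbar, mul_div_assoc', ← Finset.sum_div, Finset.mul_sum]
  rw [Finset.sum_comm, div_eq_iff (natCard_pos H).ne']
  simp [sum_shift, mul_comm]

lemma sum_fbar : ∑ x, fbar H w x = ∑ x, w x := by
  simpa using sum_mul_fbar (H := H) (fun _ ↦ 1) w fun _ _ _ ↦ rfl

variable {H} in
lemma fbar_fbar {K : AddSubgroup (G n)} (hKH : K ≤ H) : fbar H (fbar K w) g = fbar H w g := by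
  have hinv (x h : G n) (hh : h ∈ K) :
      (coset H g).indicator (1 : G n → ℝ) (x + h) = (coset H g).indicator 1 x := by
    simp only [Set.indicator_apply, add_mem_coset_iff (hKH hh), Pi.one_apply]
  refine mul_left_cancel₀ (natCard_pos H).ne' ?_
  rw [← sum_indicator_coset, ← sum_indicator_coset]
  simpa only [← Set.indicator_mul_left, Pi.one_apply, one_mul] using sum_mul_fbar _ w hinv

variable {H A} in
lemma natCard_inter_eq_sum_dens {S : Set (G n)} (hS : ∀ x, ∀ h ∈ H, x + h ∈ S ↔ x ∈ S) :
    (Nat.card ↥(A ∩ S) : ℝ) = ∑ x, S.indicator (dens A H) x := by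
  have hinv (x h : G n) (hh : h ∈ H) :
      S.indicator (1 : G n → ℝ) (x + h) = S.indicator 1 x := by
    simp only [Set.indicator_apply, hS x h hh, Pi.one_apply]
  have key := sum_mul_fbar _ (A.indicator 1) hinv
  simp only [← Set.indicator_mul_left, Pi.one_apply, one_mul, ← dens_eq_fbar] at key
  rw [key, Set.inter_comm, ← sum_indicator_one, ← Set.indicator_indicator]

variable {H g} in
lemma coset_subset {K : AddSubgroup (G n)} (hKH : K ≤ H) {x : G n} (hx : x ∈ coset H g) :
    coset K x ⊆ coset H g := fun y hy ↦ by
  have := H.add_mem (hKH hy) hx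
  rwa [ZModModule.add_add_add_cancel] at this

variable {A H g} in
lemma dens_inter_coset {K : AddSubgroup (G n)} (hKH : K ≤ H) {x : G n} (hx : x ∈ coset H g) :
    dens (A ∩ coset H g) K x = dens A K x := by
  rw [dens, dens, Set.inter_assoc, Set.inter_eq_right.2 (coset_subset hKH hx)]

variable {u v} in
lemma mul_le_fbar_mul {a b : ℝ} (hu : ∀ x, 0 ≤ u x) (hv : ∀ x, 0 ≤ v x) (ha : 0 ≤ a)
    (hb : 0 ≤ b) :
    a * b * (1 - dens {x | u x ≤ a} H g - dens {x | v x ≤ b} H g)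
      ≤ fbar H (fun x ↦ u x * v x) g := by
  rw [dens_eq_fbar, dens_eq_fbar]
  conv_lhs => rw [← fbar_const H g 1, ← fbar_sub, ← fbar_sub, ← fbar_const_mul]
  refine fbar_mono H fun x _ ↦ ?_
  have huv := mul_nonneg (hu x) (hv x)
  have hab := mul_nonneg ha hb
  by_cases hxa : u x ≤ a
  · by_cases hxb : v x ≤ b <;> simp [hxa, hxb] <;> linarith
  · by_cases hxb : v x ≤ b
    · simpa [hxa, hxb] using huv
    · simpa [hxa, hxb] using mul_le_mul (not_le.1 hxa).le (not_le.1 hxb).le hb (hu x)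

end Averages

section Fourier

variable {n : ℕ}

lemma chi_comm (x y : G n) : chi x y = chi y x := by
  have : dotp x y = dotp y x := dotProduct_comm x y
  rw [chi, chi, this]

lemma chi_add_left (x y η : G n) : chi (x + y) η = chi x η * chi y η := by
  have sign_add : ∀ a b : ZMod 2, (if a + b = 0 then (1 : ℤ) else -1) =
      (if a = 0 then 1 else -1) * (if b = 0 then 1 else -1) := by decide
  have dotp_add : dotp (x + y) η = dotp x η + dotp y η := add_dotProduct x y η
  rw [chi, chi, chi, dotp_add]
  exact_mod_cast sign_add _ _

lemma abs_chi (x η : G n) : |chi x η| = 1 := by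
  unfold chi; split_ifs <;> simp

lemma chi_zero_right (x : G n) : chi x 0 = 1 := by
  simp [chi, dotp]

lemma chi_eq_one {K : AddSubgroup (G n)} {η x : G n} (hη : η ∈ ann K) (hx : x ∈ K) :
    chi x η = 1 := if_pos (hη x hx)

lemma exists_chi_eq_neg_one {K : AddSubgroup (G n)} {η : G n} (hη : η ∉ ann K) :
    ∃ x ∈ K, chi x η = -1 := by
  obtain ⟨x, hx, hxη⟩ : ∃ x ∈ K, dotp x η ≠ 0 := by
    by_contra! h
    exact hη h
  exact ⟨x, hx, if_neg hxη⟩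

lemma sum_chi_eq_zero {K : AddSubgroup (G n)} {η : G n} (hη : η ∉ ann K) :
    ∑ x : K, chi x η = 0 := by
  obtain ⟨h, hh, hchi⟩ := exists_chi_eq_neg_one hη
  have hshift := Equiv.sum_comp (Equiv.addLeft (⟨h, hh⟩ : K)) fun x ↦ chi (x : G n) η
  simp only [Equiv.coe_addLeft, AddSubgroup.coe_add, chi_add_left, hchi, ← Finset.mul_sum]
    at hshift
  linarith

lemma ann_top : ann (⊤ : AddSubgroup (G n)) = ⊥ := by
  refine (AddSubgroup.eq_bot_iff_forall _).2 fun η hη ↦ funext fun i ↦ ?_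
  have := hη (Pi.single i 1) trivial
  rwa [show dotp (Pi.single i 1) η = η i from single_one_dotProduct i η] at this

lemma sum_chi (x : G n) : ∑ η, chi x η = if x = 0 then 2 ^ n else 0 := by
  split_ifs with hx
  · simp [hx, chi, dotp]
  · have := sum_chi_eq_zero (K := ⊤) (η := x) (by simpa [ann_top] using hx)
    rw [← this]
    exact Fintype.sum_equiv AddSubgroup.topEquiv.symm.toEquiv _ _ fun η ↦ chi_comm x η

/-- The unnormalised Fourier transform over the whole group. -/
def fourierSum (f : G n → ℝ) (η : G n) : ℝ := ∑ x, f x * chi x η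

/-- The number of triangles weighted by `f`, `u`, `v` on their three vertices, the third vertex
`z` of a triangle `x + y + z = 0` being `x + y`. -/
def triForm (f u v : G n → ℝ) : ℝ := ∑ x, ∑ y, f x * u y * v (x + y)

lemma sum_fourierSum_mul (f u v : G n → ℝ) :
    ∑ η, fourierSum f η * fourierSum u η * fourierSum v η = 2 ^ n * triForm f u v := by
  have expand (η : G n) : fourierSum f η * fourierSum u η * fourierSum v η
      = ∑ x, ∑ y, ∑ z, f x * u y * v z * chi (x + y + z) η := by
    simp_rw [fourierSum, mul_assoc, Finset.sum_mul, Finset.mul_sum, chi_add_left]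
    exact Finset.sum_congr rfl fun x _ ↦ Finset.sum_congr rfl fun y _ ↦
      Finset.sum_congr rfl fun z _ ↦ by ring
  have orthogonality (x y : G n) :
      ∑ z, v z * ∑ η, chi (x + y + z) η = 2 ^ n * v (x + y) := by
    simp only [sum_chi, ← ZModModule.sub_eq_add (x + y), sub_eq_zero, mul_ite, mul_zero,
      Finset.sum_ite_eq, Finset.mem_univ, if_true]
    ring
  simp only [expand, triForm, Finset.mul_sum]
  rw [Finset.sum_comm]
  refine Finset.sum_congr rfl fun x _ ↦ ?_
  rw [Finset.sum_comm]
  refine Finset.sum_congr rfl fun y _ ↦ ?_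
  rw [Finset.sum_comm, mul_left_comm, ← orthogonality, Finset.mul_sum]
  simp only [Finset.mul_sum, mul_assoc]

/-- Parseval's identity is the triangle identity with a point mass at `0` as third weight. -/
lemma sum_fourierSum_sq (u : G n → ℝ) : ∑ η, fourierSum u η ^ 2 = 2 ^ n * ∑ x, u x ^ 2 := by
  have key := sum_fourierSum_mul u u (Pi.single 0 1)
  have fourier_single (η : G n) : fourierSum (Pi.single 0 1) η = 1 := by
    simp [fourierSum, Pi.single_apply, chi_comm 0 η, chi_zero_right]
  simpa only [fourier_single, mul_one, ← sq, triForm, Pi.single_apply,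
    ← ZModModule.sub_eq_add, sub_eq_zero, mul_ite, mul_zero, Finset.sum_ite_eq, Finset.mem_univ,
    if_true] using key

lemma abs_triForm_le {f : G n → ℝ} {R : ℝ} (hR : ∀ η, |fourierSum f η| ≤ R) (u v : G n → ℝ) :
    |triForm f u v| ≤ R * (√(∑ x, u x ^ 2) * √(∑ x, v x ^ 2)) := by
  have cauchy_schwarz : ∑ η, |fourierSum u η| * |fourierSum v η|
      ≤ 2 ^ n * (√(∑ x, u x ^ 2) * √(∑ x, v x ^ 2)) := by
    refine (Real.sum_mul_le_sqrt_mul_sqrt _ _ _).trans_eq ?_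
    simp only [sq_abs, sum_fourierSum_sq]
    rw [Real.sqrt_mul (by positivity), Real.sqrt_mul (by positivity), mul_mul_mul_comm,
      Real.mul_self_sqrt (by positivity)]
  refine le_of_mul_le_mul_left ?_ (show (0 : ℝ) < 2 ^ n by positivity)
  calc 2 ^ n * |triForm f u v|
      = |∑ η, fourierSum f η * fourierSum u η * fourierSum v η| := by
        rw [sum_fourierSum_mul, abs_mul, abs_of_pos (show (0 : ℝ) < 2 ^ n by positivity)]
    _ ≤ ∑ η, R * (|fourierSum u η| * |fourierSum v η|) := by
        refine (Finset.abs_sum_le_sum_abs _ _).trans (Finset.sum_le_sum fun η _ ↦ ?_)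
        rw [abs_mul, abs_mul, mul_assoc]
        exact mul_le_mul_of_nonneg_right (hR η) (by positivity)
    _ ≤ 2 ^ n * (R * (√(∑ x, u x ^ 2) * √(∑ x, v x ^ 2))) := by
        rw [← Finset.mul_sum, mul_left_comm]
        exact mul_le_mul_of_nonneg_left cauchy_schwarz ((abs_nonneg _).trans (hR 0))

end Fourier

section Superregularity

variable {n : ℕ} {H : AddSubgroup (G n)} {f : G n → ℝ} {g η : G n}

lemma fCoeff_zero (H : AddSubgroup (G n)) (f : G n → ℝ) (g : G n) :
    fCoeff H g f 0 = fbar H f g := by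
  simp only [fCoeff, fbar, chi_zero_right, mul_one, add_comm g]

lemma fCoeff_add_of_mem {h : G n} (hh : h ∈ H) (f : G n → ℝ) (g η : G n) :
    fCoeff H (g + h) f η = chi h η * fCoeff H g f η := by
  have chi_sq : chi h η * chi h η = 1 := by
    rw [← abs_mul_abs_self, abs_chi, one_mul]
  rw [fCoeff, fCoeff, ← Equiv.sum_comp (Equiv.addRight (⟨h, hh⟩ : H)) fun x ↦ f (x + g) * chi x η,
    mul_div_assoc', Finset.mul_sum]
  congr 1
  refine Finset.sum_congr rfl fun x _ ↦ ?_
  rw [Equiv.coe_addRight, AddSubgroup.coe_add, chi_add_left, add_assoc, add_comm g]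
  linear_combination -f (x + (h + g)) * chi x η * chi_sq

/-- Restricting to the kernel of a character amounts to inserting the weight `1 + χ`, which is
`2` on the kernel and `0` off it. -/
lemma exists_fbar_eq_fbar_add_fCoeff (hη : η ∉ ann H) :
    ∃ K ≤ H, Nat.card H = 2 * Nat.card K ∧
      ∀ f g, fbar K f g = fbar H f g + fCoeff H g f η := by
  let K := H ⊓ (AddMonoidHom.mk' (dotp · η) (add_dotProduct · · η)).ker
  have weight (x : H) : 1 + chi x η = if (x : G n) ∈ K then 2 else 0 := by
    have mem_K : (x : G n) ∈ K ↔ dotp (x : G n) η = 0 := and_iff_right x.2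
    simp only [chi, mem_K]
    split_ifs <;> norm_num
  have weighted_sum (f : G n → ℝ) (g : G n) :
      2 * (Nat.card K * fbar K f g) = Nat.card H * (fbar H f g + fCoeff H g f η) := by
    have sum_weight : ∑ x : H, f (g + x) * (1 + chi x η) = 2 * ∑ x : K, f (g + x) := by
      simp only [weight, mul_ite, mul_zero, ← Finset.sum_filter, Finset.mul_sum]
      rw [Finset.sum_subtype (p := (· ∈ K.addSubgroupOf H)) _ (by simp [K.mem_addSubgroupOf])]
      exact Fintype.sum_equiv (AddSubgroup.addSubgroupOfEquivOfLe inf_le_left).toEquiv _ _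
        fun x ↦ mul_comm _ _
    rw [fbar, mul_div_cancel₀ _ (natCard_pos K).ne', ← sum_weight, fbar, fCoeff, ← add_div,
      mul_div_cancel₀ _ (natCard_pos H).ne', ← Finset.sum_add_distrib]
    simp only [mul_add, mul_one, add_comm g]
  have card_eq : (Nat.card H : ℝ) = 2 * Nat.card K := by
    have fCoeff_one : fCoeff H 0 (fun _ ↦ 1) η = 0 := by
      simp only [fCoeff, one_mul, sum_chi_eq_zero hη, zero_div]
    simpa only [fbar_const, fCoeff_one, mul_one, add_zero, eq_comm] using weighted_sum (fun _ ↦ 1) 0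
  refine ⟨K, inf_le_left, by exact_mod_cast card_eq, fun f g ↦ ?_⟩
  refine mul_left_cancel₀ (natCard_pos H).ne' ?_
  rw [← weighted_sum, card_eq, mul_assoc]

lemma exists_density_increment {ρ : ℝ} (h : ¬ SuperregularOn H g ρ f) :
    ∃ K ≤ H, Nat.card H = 2 * Nat.card K ∧
      ∃ g' ∈ coset H g, (1 + ρ) * fbar H f g ≤ fbar K f g' := by
  simp only [SuperregularOn, not_forall, not_le, exists_prop, fCoeff_zero] at h
  obtain ⟨η, ⟨x, hx, hxη⟩, hlarge⟩ := h
  obtain ⟨K, hKH, hcard, hfbar⟩ := exists_fbar_eq_fbar_add_fCoeff fun hη : η ∈ ann H ↦ hxη (hη x hx)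
  refine ⟨K, hKH, hcard, ?_⟩
  rcases le_or_gt 0 (fCoeff H g f η) with hsign | hsign
  · rw [abs_of_nonneg hsign] at hlarge
    exact ⟨g, mem_coset_self H g, by rw [hfbar]; linarith⟩
  · rw [abs_of_neg hsign] at hlarge
    refine ⟨g + x, add_mem_coset hx, ?_⟩
    rw [hfbar, fbar_add_of_mem _ _ hx, fCoeff_add_of_mem hx, chi, if_neg hxη]
    linarith

lemma exists_superregularOn {ρ : ℝ} (hρ : 0 ≤ ρ) (f : G n → ℝ) (H : AddSubgroup (G n))
    (g : G n) :
    ∃ K ≤ H, ∃ g' ∈ coset H g, SuperregularOn K g' ρ f ∧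
      ∃ j : ℕ, Nat.card H = 2 ^ j * Nat.card K ∧ (1 + ρ) ^ j * fbar H f g ≤ fbar K f g' := by
  induction hm : Nat.card H using Nat.strong_induction_on generalizing H g with
  | _ m ih =>
  by_cases hreg : SuperregularOn H g ρ f
  · exact ⟨H, le_rfl, g, mem_coset_self H g, hreg, 0, by rw [hm, pow_zero, one_mul],
      by rw [pow_zero, one_mul]⟩
  obtain ⟨K, hKH, hcard, g', hg', hinc⟩ := exists_density_increment hreg
  have hlt : Nat.card K < m := by
    have : 0 < Nat.card K := Nat.card_pos
    omega
  obtain ⟨L, hLK, g'', hg'', hreg', j, hcard', hinc'⟩ := ih _ hlt K g' rfl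
  refine ⟨L, hLK.trans hKH, g'', coset_subset hKH hg' hg'', hreg', j + 1, ?_, ?_⟩
  · rw [← hm, hcard, hcard', pow_succ', mul_assoc]
  · calc (1 + ρ) ^ (j + 1) * fbar H f g = (1 + ρ) ^ j * ((1 + ρ) * fbar H f g) := by ring
      _ ≤ (1 + ρ) ^ j * fbar K f g' := by gcongr
      _ ≤ fbar L f g'' := hinc'

end Superregularity

/-- A maximal set on which `τ` averages more than twice its mean over `s` is less than half of `s`,
so adjoining to it a subset of its complement yields a contradiction. -/
lemma exists_subset_sum_mul_card_le {α : Type*} {s : Finset α} {τ : α → ℝ} {P : Finset α → Prop}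
    (hτ : ∀ x ∈ s, 0 ≤ τ x)
    (hP : ∀ t ⊆ s, s.card ≤ 2 * t.card → ∃ u ⊆ t, u.Nonempty ∧ P u) :
    ∃ u ⊆ s, u.Nonempty ∧ P u ∧ (∑ x ∈ u, τ x) * s.card ≤ 2 * (∑ x ∈ s, τ x) * u.card := by
  by_contra! hbad
  let heavy := {t ∈ s.powerset | 2 * (∑ x ∈ s, τ x) * t.card < (∑ x ∈ t, τ x) * s.card}
  have mem_heavy {u : Finset α} (hus : u ⊆ s) (hu : u.Nonempty) (hPu : P u) : u ∈ heavy :=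
    Finset.mem_filter.2 ⟨Finset.mem_powerset.2 hus, hbad u hus hu hPu⟩
  obtain ⟨u₀, hu₀s, hu₀, hPu₀⟩ := hP s subset_rfl (by omega)
  obtain ⟨t, ht, hmax⟩ := heavy.exists_max_image Finset.card ⟨u₀, mem_heavy hu₀s hu₀ hPu₀⟩
  obtain ⟨hts, hheavy⟩ := Finset.mem_filter.1 ht
  rw [Finset.mem_powerset] at hts
  rcases le_or_gt (2 * t.card) s.card with hsmall | hlarge
  · obtain ⟨u, hu, hune, hPu⟩ := hP (s \ t) Finset.sdiff_subset (by
      have := Finset.card_sdiff_add_card_eq_card hts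
      omega)
    have hus := hu.trans Finset.sdiff_subset
    have hdisj : Disjoint t u := Finset.disjoint_of_subset_right hu Finset.disjoint_sdiff
    have hunion : t ∪ u ∈ heavy := by
      refine Finset.mem_filter.2 ⟨Finset.mem_powerset.2 (Finset.union_subset hts hus), ?_⟩
      rw [Finset.card_union_of_disjoint hdisj, Finset.sum_union hdisj]
      push_cast
      linarith [hbad u hus hune hPu]
    have := hmax _ hunion
    rw [Finset.card_union_of_disjoint hdisj] at this
    have := hune.card_pos
    omega
  · have hsum : ∑ x ∈ t, τ x ≤ ∑ x ∈ s, τ x :=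
      Finset.sum_le_sum_of_subset_of_nonneg hts fun x hx _ ↦ hτ x hx
    have hnonneg : 0 ≤ ∑ x ∈ s, τ x := Finset.sum_nonneg hτ
    have hlarge' : (s.card : ℝ) ≤ 2 * t.card := by exact_mod_cast hlarge.le
    nlinarith [mul_le_mul_of_nonneg_right hsum (Nat.cast_nonneg (α := ℝ) s.card),
      mul_le_mul_of_nonneg_left hlarge' hnonneg]

section Exhaustion

variable {n : ℕ} {A : Set (G n)} {H : AddSubgroup (G n)} {g : G n} {ρ : ℝ}

lemma fCoeff_congr {f₁ f₂ : G n → ℝ} (h : ∀ x ∈ coset H g, f₁ x = f₂ x) (η : G n) :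
    fCoeff H g f₁ η = fCoeff H g f₂ η := by
  refine congrArg (· / _) (Finset.sum_congr rfl fun x _ ↦ ?_)
  rw [h _ (add_comm g _ ▸ add_mem_coset x.2)]

lemma SuperregularOn.congr {f₁ f₂ : G n → ℝ} (hf : SuperregularOn H g ρ f₁)
    (h : ∀ x ∈ coset H g, f₁ x = f₂ x) : SuperregularOn H g ρ f₂ := by
  simpa only [SuperregularOn, fCoeff_congr h] using hf

lemma exists_superregularOn_inter_coset (hρ : 0 < ρ) {c : ℝ} (hc : 0 < c)
    (hA : c ≤ dens A H g) :
    ∃ K ≤ H, ∃ g' ∈ coset H g, (A ∩ coset K g').Nonempty ∧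
      SuperregularOn K g' ρ ((A ∩ coset K g').indicator 1) ∧
      (Nat.card H : ℝ) / Nat.card K ≤ 2 ^ Real.logb (1 + ρ) c⁻¹ := by
  obtain ⟨K, hKH, g', hg', hreg, j, hcard, hinc⟩ :=
    exists_superregularOn hρ.le (A.indicator 1) H g
  rw [← dens_eq_fbar, ← dens_eq_fbar] at hinc
  have hdens : (1 + ρ) ^ j * c ≤ dens A K g' :=
    (mul_le_mul_of_nonneg_left hA (by positivity)).trans hinc
  refine ⟨K, hKH, g', hg', ?_, hreg.congr fun x hx ↦ ?_, ?_⟩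
  · have hpos : 0 < dens A K g' := hdens.trans_lt' (by positivity)
    refine Set.nonempty_iff_ne_empty.2 fun hempty ↦ hpos.ne' ?_
    rw [dens, hempty]
    simp
  · rw [Set.inter_comm, ← Set.indicator_indicator, Set.indicator_of_mem hx]
  · have hpow : (1 + ρ) ^ j ≤ c⁻¹ := by
      rw [← one_div, le_div_iff₀ hc]
      exact hdens.trans (dens_le_one A K g')
    rw [hcard, Nat.cast_mul, mul_div_cancel_right₀ _ (natCard_pos K).ne', Nat.cast_pow,
      Nat.cast_ofNat, ← Real.rpow_natCast]
    refine Real.rpow_le_rpow_of_exponent_le one_le_two ?_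
    rwa [Real.le_logb_iff_rpow_le (by linarith) (by positivity), Real.rpow_natCast]

lemma exists_superregularOn_subset (hρ : 0 < ρ) (hAg : A ⊆ coset H g) (hA : 0 < dens A H g)
    {τ : G n → ℝ} (hτ : ∀ x, 0 ≤ τ x) :
    ∃ K ≤ H, ∃ g' ∈ coset H g, ∃ B ⊆ A ∩ coset K g', B.Nonempty ∧
      SuperregularOn K g' ρ (B.indicator 1) ∧
      (Nat.card H : ℝ) / Nat.card K ≤ 2 ^ Real.logb (1 + ρ) (2 / dens A H g) ∧
      (∑ x, B.indicator τ x) * Nat.card A ≤ 2 * (∑ x, A.indicator τ x) * Nat.card B := by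
  let P (B : Set (G n)) : Prop := ∃ K ≤ H, ∃ g' ∈ coset H g, B ⊆ coset K g' ∧
    SuperregularOn K g' ρ (B.indicator 1) ∧
    (Nat.card H : ℝ) / Nat.card K ≤ 2 ^ Real.logb (1 + ρ) (2 / dens A H g)
  have half_dense {t : Set (G n)} (htA : t ⊆ A) (hcard : Nat.card A ≤ 2 * Nat.card t) :
      dens A H g / 2 ≤ dens t H g := by
    rw [div_le_iff₀' two_pos, dens, dens, Set.inter_eq_left.2 hAg,
      Set.inter_eq_left.2 (htA.trans hAg), mul_div_assoc']
    gcongr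
    exact_mod_cast hcard
  have exists_piece (t : Finset (G n)) (htA : t ⊆ A.toFinset)
      (hcard : A.toFinset.card ≤ 2 * t.card) : ∃ u ⊆ t, u.Nonempty ∧ P u := by
    obtain ⟨K, hKH, g', hg', hne, hreg, hindex⟩ :=
      exists_superregularOn_inter_coset hρ (half_pos hA)
        (half_dense (t := t) (by simpa using htA) (by simpa [Set.toFinset_card] using hcard))
    rw [inv_div] at hindex
    lift ↑t ∩ coset K g' to Finset (G n) using Set.toFinite _ with u hu
    exact ⟨u, by simpa using hu.trans_subset Set.inter_subset_left, by simpa using hne, K, hKH,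
      g', hg', hu.trans_subset Set.inter_subset_right, hreg, hindex⟩
  obtain ⟨u, huA, hne, ⟨K, hKH, g', hg', huK, hreg, hindex⟩, hsum⟩ :=
    exists_subset_sum_mul_card_le (P := (P ↑·)) (fun x _ ↦ hτ x) exists_piece
  refine ⟨K, hKH, g', hg', u, Set.subset_inter (by simpa using huA) huK, hne, hreg, hindex, ?_⟩
  have sum_eq (s : Finset (G n)) : ∑ x ∈ s, τ x = ∑ x, (s : Set (G n)).indicator τ x :=
    (Finset.sum_indicator_subset τ s.subset_univ).symm
  simpa [sum_eq, Set.toFinset_card] using hsum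

end Exhaustion

section Counting

variable {n : ℕ} {K : AddSubgroup (G n)} {f : G n → ℝ} {g : G n} {ρ : ℝ}

lemma abs_fourierSum_indicator_coset (K : AddSubgroup (G n)) (f : G n → ℝ) (g η : G n) :
    |fourierSum ((coset K g).indicator f) η| = Nat.card K * |fCoeff K g f η| := by
  have hfbar : fbar K (fun x ↦ f x * chi x η) g = chi g η * fCoeff K g f η := by
    simp only [fbar, fCoeff, chi_add_left, mul_div_assoc', Finset.mul_sum, add_comm g]
    exact congrArg (· / _) (Finset.sum_congr rfl fun x _ ↦ by ring)
  rw [fourierSum, sum_indicator_coset_mul, hfbar, abs_mul, abs_mul, abs_chi, one_mul, Nat.abs_cast]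

lemma SuperregularOn.abs_fourierSum_sub_fbar_le (hreg : SuperregularOn K g ρ f) (hρ : 0 ≤ ρ)
    (hf : 0 ≤ fbar K f g) (η : G n) :
    |fourierSum ((coset K g).indicator fun x ↦ f x - fbar K f g) η|
      ≤ ρ * (Nat.card K * fbar K f g) := by
  have fCoeff_sub : fCoeff K g (fun x ↦ f x - fbar K f g) η
      = fCoeff K g f η - fbar K f g * ((∑ x : K, chi x η) / Nat.card K) := by
    simp only [fCoeff, sub_mul, Finset.sum_sub_distrib, sub_div, ← Finset.mul_sum, mul_div_assoc']
  rw [abs_fourierSum_indicator_coset, mul_left_comm]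
  refine mul_le_mul_of_nonneg_left ?_ (natCard_pos K).le
  by_cases hη : η ∈ ann K
  · have hchi (x : K) : chi (x : G n) η = 1 := chi_eq_one hη x.2
    have : fCoeff K g f η = fbar K f g := by
      rw [← fCoeff_zero]
      simp only [fCoeff, hchi, chi_zero_right]
    have hzero : fCoeff K g (fun x ↦ f x - fbar K f g) η = 0 := by
      rw [fCoeff_sub, this]
      simp [hchi]
    rw [hzero, abs_zero]
    positivity
  · obtain ⟨x, hx, hxη⟩ := by simpa [ann] using hη
    rw [fCoeff_sub, sum_chi_eq_zero hη, zero_div, mul_zero, sub_zero, ← fCoeff_zero K f g]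
    exact hreg η ⟨x, hx, hxη⟩

lemma triForm_eq_sum (f u v : G n → ℝ) : triForm f u v = ∑ y, u y * ∑ x, f x * v (x + y) := by
  simp only [triForm, Finset.mul_sum]
  rw [Finset.sum_comm]
  exact Finset.sum_congr rfl fun y _ ↦ Finset.sum_congr rfl fun x _ ↦ by ring

lemma triForm_indicator_coset (K : AddSubgroup (G n)) (g : G n) (u v : G n → ℝ) :
    triForm ((coset K g).indicator 1) u v = Nat.card K * ∑ y, fbar K u y * fbar K v (y + g) := by
  have average_v (y : G n) :
      ∑ x, (coset K g).indicator 1 x * v (x + y) = Nat.card K * fbar K v (y + g) := by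
    rw [sum_indicator_coset_mul, add_comm y, ← fbar_comp_add_right]
    simp only [Pi.one_apply, one_mul]
  have hinv (y h : G n) (hh : h ∈ K) : fbar K v (y + h + g) = fbar K v (y + g) := by
    rw [add_right_comm, fbar_add_of_mem _ _ hh]
  have average_u := sum_mul_fbar (fun y ↦ fbar K v (y + g)) u hinv
  simp only [mul_comm (fbar K v _)] at average_u
  simp only [triForm_eq_sum, average_v, mul_left_comm (u _), ← Finset.mul_sum, average_u]

lemma SuperregularOn.abs_triForm_sub_le (hreg : SuperregularOn K g ρ f) (hρ : 0 ≤ ρ)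
    (hf : 0 ≤ fbar K f g) (u v : G n → ℝ) :
    |triForm ((coset K g).indicator f) u v
        - Nat.card K * fbar K f g * ∑ y, fbar K u y * fbar K v (y + g)|
      ≤ ρ * (Nat.card K * fbar K f g) * (√(∑ x, u x ^ 2) * √(∑ x, v x ^ 2)) := by
  have hsub : triForm ((coset K g).indicator fun x ↦ f x - fbar K f g) u v
      = triForm ((coset K g).indicator f) u v
        - fbar K f g * triForm ((coset K g).indicator 1) u v := by
    simp only [triForm, Finset.mul_sum, ← Finset.sum_sub_distrib, Set.indicator_apply,
      Pi.one_apply]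
    refine Finset.sum_congr rfl fun x _ ↦ Finset.sum_congr rfl fun y _ ↦ ?_
    split_ifs <;> ring
  rw [triForm_indicator_coset, mul_left_comm, ← mul_assoc] at hsub
  rw [← hsub]
  exact abs_triForm_le (hreg.abs_fourierSum_sub_fbar_le hρ hf) u v

lemma triForm_indicator_one (S₁ S₂ S₃ : Set (G n)) :
    triForm (S₁.indicator 1) (S₂.indicator 1) (S₃.indicator 1) = triBetween S₁ S₂ S₃ := by
  have third_vertex (x y z : G n) : (x ∈ S₁ ∧ y ∈ S₂ ∧ z ∈ S₃ ∧ x + y + z = 0)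
      ↔ x + y = z ∧ x ∈ S₁ ∧ y ∈ S₂ ∧ x + y ∈ S₃ := by
    rw [← ZModModule.sub_eq_add (x + y), sub_eq_zero]
    grind
  have sum_third (x y : G n) :
      (∑ z, if x ∈ S₁ ∧ y ∈ S₂ ∧ z ∈ S₃ ∧ x + y + z = 0 then (1 : ℝ) else 0)
        = S₁.indicator 1 x * S₂.indicator 1 y * S₃.indicator 1 (x + y) := by
    simp only [third_vertex, ite_and, Finset.sum_ite_eq, Finset.mem_univ, if_true,
      Set.indicator_apply, Pi.one_apply]
    split_ifs <;> norm_num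
  rw [triBetween, Nat.card_eq_fintype_card, Fintype.card_subtype, ← Finset.sum_boole,
    Fintype.sum_prod_type]
  simp only [Fintype.sum_prod_type, sum_third, triForm]

end Counting

section Shattering

variable {n : ℕ} {H K : AddSubgroup (G n)} {A A₁ A₂ A₃ : Set (G n)} {g g₁ g₂ g₃ : G n}
  {α β k ρ : ℝ}

lemma shatters_iff : Shatters K H A g α β k ↔ (Nat.card H : ℝ) / Nat.card K ≤ 2 ^ k ∧
    α ≤ dens {x | dens A K x ≤ β * dens A H g} H g := by
  have hdens : dens {x | dens A K x ≤ β * dens A H g} H g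
      = Nat.card {y : H // dens A K (g + y) ≤ β * dens A H g} / Nat.card H := by
    rw [dens_eq_fbar]
    exact congrArg (· / _) (sum_indicator_one {y : H | dens A K (g + y) ≤ β * dens A H g})
  have hle (y : G n) (c : ℝ) :
      (Nat.card ↥(A ∩ coset K y) : ℝ) ≤ c * Nat.card K ↔ dens A K y ≤ c :=
    (div_le_iff₀ (natCard_pos K)).symm
  simp only [hdens, Shatters, hle]

lemma Shatters.mono {k' : ℝ} (h : Shatters K H A g α β k) (hk : k ≤ k') :
    Shatters K H A g α β k' :=
  ⟨h.1.trans (Real.rpow_le_rpow_of_exponent_le one_le_two hk), h.2⟩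

lemma shatters_add_iff {h : G n} (hh : h ∈ H) :
    Shatters K H A (g + h) α β k ↔ Shatters K H A g α β k := by
  simp only [shatters_iff, dens_add_of_mem _ _ hh]

lemma Shatters.of_inter_coset (hKH : K ≤ H) (h : Shatters K H (A ∩ coset H g) g α β k) :
    Shatters K H A g α β k := by
  rw [shatters_iff, dens_inter_coset le_rfl (mem_coset_self H g)] at h
  rw [shatters_iff]
  refine ⟨h.1, h.2.trans_eq ?_⟩
  simp only [dens_eq_fbar _ H g]
  refine fbar_congr H fun x hx ↦ ?_
  simp only [Set.indicator_apply, Set.mem_ofPred_eq, dens_inter_coset hKH hx]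

lemma card_mul_le_sum_dens_mul_dens {g' : G n} (hg : g₂ + g' + g₃ ∈ H) {a b : ℝ} (ha : 0 ≤ a)
    (hb : 0 ≤ b) (h₂ : dens {x | dens A₂ K x ≤ a} H g₂ ≤ α)
    (h₃ : dens {x | dens A₃ K x ≤ b} H g₃ ≤ α) :
    Nat.card H * (a * b * (1 - 2 * α)) ≤ ∑ y, dens A₂ K y * dens A₃ K (y + g') := by
  have h₃' : dens {x | dens A₃ K (x + g') ≤ b} H g₂ ≤ α := by
    have hg₃ : g₃ + (g₂ + g' + g₃) = g₂ + g' := by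
      rw [add_comm g₃, add_assoc, ZModModule.add_self, add_zero]
    rw [← dens_add_of_mem _ _ hg, hg₃, dens_eq_fbar, ← fbar_comp_add_right] at h₃
    rwa [dens_eq_fbar]
  have hmean := mul_le_fbar_mul H g₂ (dens_nonneg A₂ K) (fun x ↦ dens_nonneg A₃ K (x + g')) ha hb
  calc Nat.card H * (a * b * (1 - 2 * α))
      ≤ Nat.card H * (a * b * (1 - dens {x | dens A₂ K x ≤ a} H g₂
          - dens {x | dens A₃ K (x + g') ≤ b} H g₂)) := by
        refine mul_le_mul_of_nonneg_left ?_ (natCard_pos H).le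
        exact mul_le_mul_of_nonneg_left (by linarith) (mul_nonneg ha hb)
    _ ≤ Nat.card H * fbar H (fun x ↦ dens A₂ K x * dens A₃ K (x + g')) g₂ := by gcongr
    _ ≤ ∑ y, dens A₂ K y * dens A₃ K (y + g') := by
        rw [← sum_indicator_coset]
        exact Finset.sum_le_sum fun x _ ↦ Set.indicator_le_self'
          (fun x _ ↦ mul_nonneg (dens_nonneg A₂ K x) (dens_nonneg A₃ K (x + g'))) x

lemma SuperregularOn.card_mul_le_triForm {B : Set (G n)}
    (hreg : SuperregularOn K g ρ (B.indicator 1)) (hρ : 0 ≤ ρ) (hB : B ⊆ coset K g) :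
    Nat.card B * (∑ y, dens A₂ K y * dens A₃ K (y + g) - ρ * (√(Nat.card A₂) * √(Nat.card A₃)))
      ≤ triForm (B.indicator 1) (A₂.indicator 1) (A₃.indicator 1) := by
  have sum_sq (S : Set (G n)) : ∑ x, S.indicator (1 : G n → ℝ) x ^ 2 = Nat.card S := by
    simp [Set.indicator_apply]
  have card_B : Nat.card K * fbar K (B.indicator 1) g = Nat.card B := by
    rw [← dens_eq_fbar, ← natCard_eq_mul_dens hB]
  have hcount := hreg.abs_triForm_sub_le hρ (dens_eq_fbar B K g ▸ dens_nonneg B K g)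
    (A₂.indicator 1) (A₃.indicator 1)
  rw [Set.indicator_indicator, Set.inter_eq_right.2 hB, card_B, sum_sq, sum_sq] at hcount
  simp only [← dens_eq_fbar] at hcount
  linarith [neg_abs_le (triForm (B.indicator 1) (A₂.indicator 1) (A₃.indicator 1)
        - Nat.card B * ∑ y, dens A₂ K y * dens A₃ K (y + g))]

lemma exists_superregularOn_triForm_le (hA : A ⊆ coset H g) (hd : 0 < dens A H g) (hρ : 0 < ρ)
    {u v : G n → ℝ} (hu : ∀ x, 0 ≤ u x) (hv : ∀ x, 0 ≤ v x) :
    ∃ K ≤ H, ∃ g' ∈ coset H g, ∃ B ⊆ coset K g', B.Nonempty ∧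
      SuperregularOn K g' ρ (B.indicator 1) ∧
      (Nat.card H : ℝ) / Nat.card K ≤ 2 ^ Real.logb (1 + ρ) (2 / dens A H g) ∧
      triForm (B.indicator 1) u v * Nat.card A
        ≤ 2 * triForm (A.indicator 1) u v * Nat.card B := by
  let τ (x : G n) : ℝ := ∑ y, u y * v (x + y)
  have sum_τ (S : Set (G n)) : ∑ x, S.indicator τ x = triForm (S.indicator 1) u v := by
    simp only [triForm, mul_assoc, ← Finset.mul_sum]
    exact Finset.sum_congr rfl fun x _ ↦ by by_cases hx : x ∈ S <;> simp [hx, τ]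
  obtain ⟨K, hKH, g', hg', B, hB, hne, hreg, hindex, hweight⟩ :=
    exists_superregularOn_subset hρ hA hd (τ := τ) fun x ↦
      Finset.sum_nonneg fun y _ ↦ mul_nonneg (hu y) (hv (x + y))
  rw [sum_τ, sum_τ] at hweight
  exact ⟨K, hKH, g', hg', B, hB.trans Set.inter_subset_right, hne, hreg, hindex, hweight⟩

lemma sqrt_natCard_mul_sqrt_natCard (h₂ : A₂ ⊆ coset H g₂) (h₃ : A₃ ⊆ coset H g₃) :
    √(Nat.card A₂) * √(Nat.card A₃) = Nat.card H * √(dens A₂ H g₂ * dens A₃ H g₃) := by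
  rw [← Real.sqrt_mul (Nat.cast_nonneg _), natCard_eq_mul_dens h₂, natCard_eq_mul_dens h₃,
    mul_mul_mul_comm, Real.sqrt_mul (by positivity), Real.sqrt_mul_self (by positivity)]

lemma exists_shatters_of_triBetween_lt (h₁ : A₁ ⊆ coset H g₁) (h₂ : A₂ ⊆ coset H g₂)
    (h₃ : A₃ ⊆ coset H g₃) (hg : g₁ + g₂ + g₃ ∈ H) (hρ : 0 < ρ) (hβ : 0 ≤ β)
    (hd₁ : 0 < dens A₁ H g₁)
    (hfew : 2 * triBetween A₁ A₂ A₃ < dens A₁ H g₁ * ((1 - 2 * α) * β ^ 2 *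
      (dens A₂ H g₂ * dens A₃ H g₃) - ρ * √(dens A₂ H g₂ * dens A₃ H g₃)) * Nat.card H ^ 2) :
    ∃ K ≤ H, Shatters K H A₂ g₂ α β (Real.logb (1 + ρ) (2 / dens A₁ H g₁)) ∨
      Shatters K H A₃ g₃ α β (Real.logb (1 + ρ) (2 / dens A₁ H g₁)) := by
  have indicator_nonneg (S : Set (G n)) : ∀ x, 0 ≤ S.indicator (1 : G n → ℝ) x :=
    Set.indicator_nonneg fun _ _ ↦ zero_le_one
  obtain ⟨K, hKH, g', hg', B, hB, hne, hreg, hindex, hweight⟩ :=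
    exists_superregularOn_triForm_le h₁ hd₁ hρ (indicator_nonneg A₂) (indicator_nonneg A₃)
  refine ⟨K, hKH, ?_⟩
  by_contra! hns
  simp only [shatters_iff, hindex, true_and, not_le] at hns
  have hg'' : g₂ + g' + g₃ ∈ H := by
    convert H.add_mem hg' hg using 1
    rw [add_assoc g₁, ZModModule.add_add_add_cancel, ← add_assoc, add_comm g']
  have main_term := card_mul_le_sum_dens_mul_dens hg'' (mul_nonneg hβ (dens_nonneg A₂ H g₂))
    (mul_nonneg hβ (dens_nonneg A₃ H g₃)) hns.1.le hns.2.le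
  have hcount := hreg.card_mul_le_triForm (A₂ := A₂) (A₃ := A₃) hρ.le hB
  have card_B_pos : (0 : ℝ) < Nat.card B := by
    have := hne.to_subtype
    exact_mod_cast Nat.card_pos
  rw [triForm_indicator_one A₁, natCard_eq_mul_dens h₁] at hweight
  rw [sqrt_natCard_mul_sqrt_natCard h₂ h₃] at hcount
  refine hfew.not_ge (le_of_mul_le_mul_right (hweight.trans' ?_) card_B_pos)
  calc _ = Nat.card B * (Nat.card H * (β * dens A₂ H g₂ * (β * dens A₃ H g₃) * (1 - 2 * α))
          - ρ * (Nat.card H * √(dens A₂ H g₂ * dens A₃ H g₃))) * (Nat.card H * dens A₁ H g₁) := by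
        ring
    _ ≤ _ := by
        refine mul_le_mul_of_nonneg_right (hcount.trans' ?_) (by positivity)
        gcongr

end Shattering

section Entropy

variable {n : ℕ} {H H' K : AddSubgroup (G n)} {A : Set (G n)} {g : G n} {α β k : ℝ}

lemma tangent_le_ent {x y : ℝ} (hx : 0 ≤ x) (hy : 0 < y) : x * Real.log y + x - y ≤ ent x := by
  rcases hx.eq_or_lt with rfl | hx
  · simpa [ent] using hy.le
  · have hlog := Real.log_le_sub_one_of_pos (div_pos hy hx)
    rw [Real.log_div hy.ne' hx.ne', le_sub_iff_add_le, le_div_iff₀ hx] at hlog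
    rw [ent]
    linarith

/-- To the left of `β * y`, the tangent of `ent` at `β * y` exceeds the tangent at `y` by at least
`(1 - β + ent β) * y`. -/
lemma tangent_add_le_ent {x y : ℝ} (hx : 0 ≤ x) (hy : 0 < y) (hβ₀ : 0 < β) (hβ₁ : β ≤ 1)
    (hxy : x ≤ β * y) : x * Real.log y + x - y + (1 - β + ent β) * y ≤ ent x := by
  have htangent := tangent_le_ent hx (mul_pos hβ₀ hy)
  rw [Real.log_mul hβ₀.ne' hy.ne'] at htangent
  have := mul_le_mul_of_nonpos_right hxy (Real.log_nonpos hβ₀.le hβ₁)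
  rw [ent]
  linarith

lemma one_sub_add_ent_nonneg (hβ : 0 ≤ β) : 0 ≤ 1 - β + ent β := by
  have := tangent_le_ent hβ one_pos
  rw [Real.log_one] at this
  linarith

lemma fbar_jensen {φ : ℝ → ℝ} (hφ : ConvexOn ℝ (Set.Ici 0) φ) {w : G n → ℝ} (hw : ∀ x, 0 ≤ w x)
    (H : AddSubgroup (G n)) (g : G n) : φ (fbar H w g) ≤ fbar H (fun x ↦ φ (w x)) g := by
  have := hφ.map_sum_le (t := Finset.univ) (w := fun _ : H ↦ (Nat.card H : ℝ)⁻¹)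
    (p := fun y ↦ w (g + y)) (fun _ _ ↦ by positivity) (by simp) fun _ _ ↦ hw _
  simpa only [fbar, smul_eq_mul, ← Finset.mul_sum, div_eq_inv_mul] using this

lemma fbar_dens (hKH : K ≤ H) (A : Set (G n)) (g : G n) :
    fbar H (dens A K) g = dens A H g := by
  rw [dens_eq_fbar A H, ← fbar_fbar (A.indicator 1) g hKH]
  exact congrArg (fbar H · g) (funext (dens_eq_fbar A K))

lemma ent_dens_le_meanEntCoset (hKH : K ≤ H) (A : Set (G n)) (g : G n) :
    ent (dens A H g) ≤ meanEntCoset A H K g := by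
  rw [← fbar_dens hKH]
  exact fbar_jensen Real.convexOn_mul_log (dens_nonneg A K) H g

lemma meanEntCoset_anti (hH'K : H' ≤ K) (hKH : K ≤ H) (A : Set (G n)) (g : G n) :
    meanEntCoset A H K g ≤ meanEntCoset A H H' g :=
  calc meanEntCoset A H K g ≤ fbar H (meanEntCoset A K H') g :=
        fbar_mono H fun x _ ↦ ent_dens_le_meanEntCoset hH'K A x
    _ = meanEntCoset A H H' g := fbar_fbar (fun x ↦ ent (dens A H' x)) g hKH

lemma Shatters.ent_add_le_meanEntCoset (hs : Shatters K H A g α β k) (hH'K : H' ≤ K)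
    (hKH : K ≤ H) (hβ₀ : 0 < β) (hβ₁ : β ≤ 1) :
    ent (dens A H g) + (1 - β + ent β) * α * dens A H g ≤ meanEntCoset A H H' g := by
  rcases (dens_nonneg A H g).eq_or_lt with hd | hd
  · simpa [← hd] using ent_dens_le_meanEntCoset (hH'K.trans hKH) A g
  refine le_trans ?_ (meanEntCoset_anti hH'K hKH A g)
  set d := dens A H g
  let sparse : Set (G n) := {x | dens A K x ≤ β * d}
  have hγ := one_sub_add_ent_nonneg hβ₀.le
  have tangent (x : G n) : Real.log d * dens A K x + dens A K x - d
      + (1 - β + ent β) * d * sparse.indicator 1 x ≤ ent (dens A K x) := by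
    by_cases hx : dens A K x ≤ β * d
    · simpa [sparse, hx, mul_comm] using tangent_add_le_ent (dens_nonneg A K x) hd hβ₀ hβ₁ hx
    · simpa [sparse, hx, mul_comm] using tangent_le_ent (dens_nonneg A K x) hd
  have averaged := fbar_mono H (g := g) fun x _ ↦ tangent x
  rw [fbar_add, fbar_sub, fbar_add, fbar_const_mul, fbar_const_mul, fbar_const, fbar_dens hKH,
    ← dens_eq_fbar] at averaged
  have hα : α ≤ dens sparse H g := (shatters_iff.1 hs).2
  calc ent d + (1 - β + ent β) * α * d
      ≤ Real.log d * d + d - d + (1 - β + ent β) * d * dens sparse H g := by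
        rw [ent]
        nlinarith [mul_le_mul_of_nonneg_left hα (mul_nonneg hγ hd.le)]
    _ ≤ meanEntCoset A H K g := averaged

lemma meanEntG_add_le (hH' : H' ≤ H) (hβ₀ : 0 < β) (hβ₁ : β ≤ 1) :
    meanEntG A H + (1 - β + ent β) * α *
        (Nat.card ↥(A ∩ {g | ∃ K ≤ H, H' ≤ K ∧ Shatters K H A g α β k}) / 2 ^ n)
      ≤ meanEntG A H' := by
  set S := {g | ∃ K ≤ H, H' ≤ K ∧ Shatters K H A g α β k}
  have hS (x h : G n) (hh : h ∈ H) : x + h ∈ S ↔ x ∈ S := by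
    simp only [S, Set.mem_ofPred_eq, shatters_add_iff hh]
  have gain (g : G n) : ent (dens A H g) + (1 - β + ent β) * α * S.indicator (dens A H) g
      ≤ meanEntCoset A H H' g := by
    by_cases hg : g ∈ S
    · obtain ⟨K, hKH, hH'K, hs⟩ := hg
      rw [Set.indicator_of_mem (show g ∈ S from ⟨K, hKH, hH'K, hs⟩)]
      exact hs.ent_add_le_meanEntCoset hH'K hKH hβ₀ hβ₁
    · simpa [hg] using ent_dens_le_meanEntCoset hH' A g
  have total := Finset.sum_le_sum fun g (_ : g ∈ Finset.univ) ↦ gain g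
  rw [Finset.sum_add_distrib, ← Finset.mul_sum, ← natCard_inter_eq_sum_dens hS] at total
  have average : ∑ g, meanEntCoset A H H' g = ∑ g, ent (dens A H' g) :=
    sum_fbar H fun x ↦ ent (dens A H' x)
  rw [average] at total
  have card_G : (Fintype.card (G n) : ℝ) = 2 ^ n := by simp
  rw [meanEntG, meanEntG, card_G, mul_div_assoc', ← add_div]
  gcongr

lemma relIndex_eq_div (hKH : K ≤ H) : (K.relIndex H : ℝ) = Nat.card H / Nat.card K := by
  rw [eq_div_iff (natCard_pos K).ne']
  refine mul_right_cancel₀ (b := (H.index : ℝ)) ?_ ?_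
  · exact_mod_cast AddSubgroup.index_ne_zero_of_finite
  · rw [natCard_mul_index, mul_right_comm, ← natCard_mul_index K, mul_comm,
      ← AddSubgroup.relIndex_mul_index hKH, Nat.cast_mul]

lemma exists_common_refinement (A : Set (G n)) (H : AddSubgroup (G n)) (hk : 0 ≤ k) :
    ∃ H' ≤ H, (H'.index : ℝ) ≤ H.index * (2 ^ k) ^ H.index ∧
      ∀ g, (∃ K ≤ H, Shatters K H A g α β k) → ∃ K ≤ H, H' ≤ K ∧ Shatters K H A g α β k := by
  have exists_refinement (q : G n ⧸ H) : ∃ K ≤ H, (K.relIndex H : ℝ) ≤ 2 ^ k ∧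
      ((∃ K ≤ H, Shatters K H A q.out α β k) → Shatters K H A q.out α β k) := by
    by_cases hq : ∃ K ≤ H, Shatters K H A q.out α β k
    · obtain ⟨K, hKH, hs⟩ := hq
      exact ⟨K, hKH, relIndex_eq_div hKH ▸ hs.1, fun _ ↦ hs⟩
    · refine ⟨H, le_rfl, ?_, fun h ↦ absurd h hq⟩
      simpa using Real.one_le_rpow one_le_two hk
  choose K hKH hindex hshat using exists_refinement
  refine ⟨⨅ q, K q, iInf_le_of_le 0 (hKH 0), ?_, fun g ⟨L, hLH, hs⟩ ↦ ?_⟩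
  · rw [← AddSubgroup.relIndex_mul_index (iInf_le_of_le 0 (hKH 0)), Nat.cast_mul, mul_comm]
    gcongr
    calc ((⨅ q, K q).relIndex H : ℝ) ≤ ∏ q, ((K q).relIndex H : ℝ) := by
          exact_mod_cast AddSubgroup.relIndex_iInf_le K
      _ ≤ ∏ _q : G n ⧸ H, (2 : ℝ) ^ k := Finset.prod_le_prod (by simp) fun q _ ↦ hindex q
      _ = (2 ^ k) ^ H.index := by
          rw [Finset.prod_const, Finset.card_univ, ← Nat.card_eq_fintype_card]
          rfl
  · obtain ⟨h, hout⟩ := QuotientAddGroup.mk_out_eq_add H g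
    refine ⟨K g, hKH g, iInf_le K g, ?_⟩
    rw [← shatters_add_iff h.2, ← hout]
    exact hshat g ⟨L, hLH, hout ▸ (shatters_add_iff h.2).2 hs⟩

lemma exists_meanEntG_add_le (A : Set (G n)) (H : AddSubgroup (G n)) (hk : 0 ≤ k) (hα : 0 ≤ α)
    (hβ₀ : 0 < β) (hβ₁ : β ≤ 1) :
    ∃ H' ≤ H, (H'.index : ℝ) ≤ H.index * (2 ^ k) ^ H.index ∧
      meanEntG A H + (1 - β + ent β) * α *
          (Nat.card ↥(A ∩ {g | ∃ K ≤ H, Shatters K H A g α β k}) / 2 ^ n)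
        ≤ meanEntG A H' := by
  obtain ⟨H', hH', hindex, hrefine⟩ := exists_common_refinement (α := α) (β := β) A H hk
  refine ⟨H', hH', hindex, (meanEntG_add_le (α := α) (k := k) hH' hβ₀ hβ₁).trans' ?_⟩
  have := one_sub_add_ent_nonneg hβ₀.le
  gcongr
  exact Nat.card_mono (Set.toFinite _) (Set.inter_subset_inter_right A hrefine)

end Entropy

section Triangles

variable {n : ℕ} {A : Set (G n)} {H : AddSubgroup (G n)} {ε : ℝ}
  {𝒯 : Finset (G n × G n × G n)}

lemma card_le_natCard_of_pairwiseDisjoint {ι α : Type*} [Finite α] {s : Finset ι} {f : ι → Set α}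
    (hf : (s : Set ι).PairwiseDisjoint f) {U : Set α} (hU : ∀ i ∈ s, (f i ∩ U).Nonempty) :
    s.card ≤ Nat.card U := by
  choose x hxf hxU using hU
  have hinj : Function.Injective fun i : s ↦ (⟨x i i.2, hxU i i.2⟩ : U) := fun i j hij ↦ by
    have hx : x i i.2 = x j j.2 := congrArg Subtype.val hij
    exact Subtype.ext (hf.elim_set i.2 j.2 _ (hxf i i.2) (hx ▸ hxf j j.2))
  simpa using Nat.card_le_card_of_injective _ hinj

lemma natCard_inter_dens_lt_le (A : Set (G n)) (H : AddSubgroup (G n)) {c : ℝ} (hc : 0 ≤ c) :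
    (Nat.card ↥(A ∩ {x | dens A H x < c}) : ℝ) ≤ c * 2 ^ n := by
  have hinv (x h : G n) (hh : h ∈ H) :
      x + h ∈ {x | dens A H x < c} ↔ x ∈ {x | dens A H x < c} := by
    simp only [Set.mem_ofPred_eq, dens_add_of_mem A x hh]
  rw [natCard_inter_eq_sum_dens hinv]
  calc ∑ x, {x | dens A H x < c}.indicator (dens A H) x ≤ ∑ _x : G n, c :=
        Finset.sum_le_sum fun x _ ↦ Set.indicator_apply_le' (fun hx ↦ le_of_lt hx) fun _ ↦ hc
    _ = c * 2 ^ n := by simp [mul_comm]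

lemma triBetween_le_triCount {S₁ S₂ S₃ : Set (G n)} (h₁ : S₁ ⊆ A) (h₂ : S₂ ⊆ A) (h₃ : S₃ ⊆ A) :
    triBetween S₁ S₂ S₃ ≤ triCount A :=
  Nat.card_le_card_of_injective _ (Subtype.impEmbedding _ _ fun _ hp ↦
    ⟨h₁ hp.1, h₂ hp.2.1, h₃ hp.2.2.1, hp.2.2.2⟩).injective

lemma main_term_lower_bound {d₁ d₂ d₃ : ℝ} (hε : 0 < ε) (hε₁ : ε ≤ 1) (h₁ : 3 / 4 * ε ≤ d₁)
    (h₂ : 3 / 4 * ε ≤ d₂) (h₃ : 3 / 4 * ε ≤ d₃) :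
    2 * (ε / 4) ^ 3
      ≤ d₁ * ((1 - 2 * (1 / 8)) * (1 / 2) ^ 2 * (d₂ * d₃) - ε ^ 2 / 16 * √(d₂ * d₃)) := by
  have hprod : (3 / 4 * ε) ^ 2 ≤ d₂ * d₃ := by nlinarith
  have hsqrt : 3 / 4 * ε ≤ √(d₂ * d₃) := Real.le_sqrt_of_sq_le hprod
  have herror : ε ^ 2 / 16 * √(d₂ * d₃) ≤ d₂ * d₃ / 12 := by
    have hsq := Real.mul_self_sqrt ((sq_nonneg _).trans hprod)
    calc ε ^ 2 / 16 * √(d₂ * d₃) ≤ √(d₂ * d₃) / 12 * √(d₂ * d₃) :=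
          mul_le_mul_of_nonneg_right (by nlinarith) (Real.sqrt_nonneg _)
      _ = d₂ * d₃ / 12 := by rw [div_mul_eq_mul_div, hsq]
  have hd₁ : 0 ≤ d₁ := by linarith
  calc 2 * (ε / 4) ^ 3 ≤ 3 / 4 * ε * (5 / 48 * (3 / 4 * ε) ^ 2) := by nlinarith [pow_pos hε 3]
    _ ≤ d₁ * (5 / 48 * (d₂ * d₃)) := by gcongr
    _ ≤ _ := by
        gcongr
        linarith

lemma exists_shatters_of_triCount_lt (hε : 0 < ε) (hε₁ : ε ≤ 1)
    (hfew : triCount A < (ε / 4) ^ 3 * (Nat.card H : ℝ) ^ 2) {g₁ g₂ g₃ : G n}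
    (hg : g₁ + g₂ + g₃ = 0) (h₁ : 3 / 4 * ε ≤ dens A H g₁) (h₂ : 3 / 4 * ε ≤ dens A H g₂)
    (h₃ : 3 / 4 * ε ≤ dens A H g₃) :
    ∃ K ≤ H, Shatters K H A g₂ (1 / 8) (1 / 2) (Real.logb (1 + ε ^ 2 / 16) (4 / ε)) ∨
      Shatters K H A g₃ (1 / 8) (1 / 2) (Real.logb (1 + ε ^ 2 / 16) (4 / ε)) := by
  have dens_inter (g : G n) : dens (A ∩ coset H g) H g = dens A H g :=
    dens_inter_coset le_rfl (mem_coset_self H g)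
  have hlog : Real.logb (1 + ε ^ 2 / 16) (2 / dens A H g₁)
      ≤ Real.logb (1 + ε ^ 2 / 16) (4 / ε) := by
    refine Real.logb_le_logb_of_le (by linarith [pow_pos hε 2]) (div_pos two_pos (by linarith)) ?_
    rw [div_le_div_iff₀ (by linarith) hε]
    linarith
  obtain ⟨K, hKH, hs⟩ := exists_shatters_of_triBetween_lt (α := 1 / 8) (β := 1 / 2)
    (ρ := ε ^ 2 / 16) (A₁ := A ∩ coset H g₁) (A₂ := A ∩ coset H g₂) (A₃ := A ∩ coset H g₃)
    Set.inter_subset_right Set.inter_subset_right Set.inter_subset_right (hg ▸ H.zero_mem)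
    (by positivity) (by norm_num) (by rw [dens_inter]; linarith) (by
      rw [dens_inter, dens_inter, dens_inter]
      have hmono : (triBetween (A ∩ coset H g₁) (A ∩ coset H g₂) (A ∩ coset H g₃) : ℝ)
          ≤ triCount A := by
        exact_mod_cast triBetween_le_triCount Set.inter_subset_left Set.inter_subset_left
          Set.inter_subset_left
      have := mul_le_mul_of_nonneg_right (main_term_lower_bound hε hε₁ h₁ h₂ h₃)
        (sq_nonneg (Nat.card H : ℝ))
      linarith)
  rw [dens_inter] at hs
  exact ⟨K, hKH, hs.imp (fun h ↦ (h.of_inter_coset hKH).mono hlog)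
    fun h ↦ (h.of_inter_coset hKH).mono hlog⟩

lemma le_natCard_shattered (hε : 0 < ε) (hε₁ : ε ≤ 1) (hcard : ε * 2 ^ n ≤ 𝒯.card)
    (htri : ∀ p ∈ 𝒯, p.1 + p.2.1 + p.2.2 = 0)
    (hdisj : (𝒯 : Set (G n × G n × G n)).PairwiseDisjoint elems) (hsub : ∀ p ∈ 𝒯, elems p ⊆ A)
    (hfew : triCount A < (ε / 4) ^ 3 * (Nat.card H : ℝ) ^ 2) :
    ε / 4 * 2 ^ n ≤ Nat.card ↥(A ∩ {g | ∃ K ≤ H, Shatters K H A g (1 / 8) (1 / 2)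
      (Real.logb (1 + ε ^ 2 / 16) (4 / ε))}) := by
  set S := {g | ∃ K ≤ H, Shatters K H A g (1 / 8) (1 / 2) (Real.logb (1 + ε ^ 2 / 16) (4 / ε))}
  let sparse : Set (G n) := {x | dens A H x < 3 / 4 * ε}
  have meets (p) (hp : p ∈ 𝒯) : (elems p ∩ (A ∩ sparse ∪ A ∩ S)).Nonempty := by
    by_contra! hempty
    have avoids {x : G n} (hx : x ∈ elems p) : 3 / 4 * ε ≤ dens A H x ∧ x ∉ S := by
      have hxA := hsub p hp hx
      have : x ∉ A ∩ sparse ∪ A ∩ S := fun h ↦ hempty.subset ⟨hx, h⟩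
      simpa [hxA, sparse] using this
    have h₁ := avoids (x := p.1) (by simp [elems])
    have h₂ := avoids (x := p.2.1) (by simp [elems])
    have h₃ := avoids (x := p.2.2) (by simp [elems])
    obtain ⟨K, hKH, hs | hs⟩ :=
      exists_shatters_of_triCount_lt hε hε₁ hfew (htri p hp) h₁.1 h₂.1 h₃.1
    exacts [h₂.2 ⟨K, hKH, hs⟩, h₃.2 ⟨K, hKH, hs⟩]
  have card_union : (𝒯.card : ℝ) ≤ Nat.card ↥(A ∩ sparse) + Nat.card ↥(A ∩ S) := by
    exact_mod_cast (card_le_natCard_of_pairwiseDisjoint hdisj meets).trans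
      (Set.ncard_union_le _ _)
  linarith [natCard_inter_dens_lt_le A H (c := 3 / 4 * ε) (by positivity)]

lemma le_one_of_mul_two_pow_le_card (hcard : ε * 2 ^ n ≤ 𝒯.card)
    (hdisj : (𝒯 : Set (G n × G n × G n)).PairwiseDisjoint elems) : ε ≤ 1 := by
  have hle : (𝒯.card : ℝ) ≤ 2 ^ n := by
    exact_mod_cast (card_le_natCard_of_pairwiseDisjoint hdisj (U := Set.univ) fun p _ ↦
      ⟨p.1, by simp [elems]⟩).trans_eq (by simp)
  exact le_of_mul_le_mul_right (by linarith) (show (0 : ℝ) < 2 ^ n by positivity)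

lemma natCast_mul_pow_le {L : ℝ} (hL : 1 ≤ L) (T : ℕ) :
    T * ((2 : ℝ) ^ L) ^ T ≤ (2 ^ (2 * L)) ^ T := by
  have htwo : (2 : ℝ) ≤ 2 ^ L := by simpa using Real.rpow_le_rpow_of_exponent_le one_le_two hL
  have hT : (T : ℝ) ≤ (2 ^ L) ^ T :=
    calc (T : ℝ) ≤ 2 ^ T := by exact_mod_cast Nat.lt_two_pow_self.le
      _ ≤ (2 ^ L) ^ T := by gcongr
  calc T * ((2 : ℝ) ^ L) ^ T ≤ (2 ^ L) ^ T * (2 ^ L) ^ T := by gcongr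
    _ = (2 ^ (2 * L)) ^ T := by rw [← mul_pow, ← Real.rpow_add two_pos, two_mul]

lemma one_le_logb (hε : 0 < ε) (hε₁ : ε ≤ 1) : 1 ≤ Real.logb (1 + ε ^ 2 / 16) (4 / ε) := by
  rw [Real.le_logb_iff_rpow_le (by linarith [pow_pos hε 2]) (by positivity), Real.rpow_one,
    le_div_iff₀ hε]
  nlinarith [pow_le_one₀ hε.le hε₁ (n := 3)]

end Triangles

theorem main_lemma_general {n : ℕ} (A : Set (G n)) (ε : ℝ) (hε : 0 < ε)
    (𝒯 : Finset (G n × G n × G n)) (hcard : ε * 2 ^ n ≤ 𝒯.card)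
    (htri : ∀ p ∈ 𝒯, p.1 + p.2.1 + p.2.2 = 0)
    (hdisj : (𝒯 : Set (G n × G n × G n)).PairwiseDisjoint elems) (hsub : ∀ p ∈ 𝒯, elems p ⊆ A)
    (H : AddSubgroup (G n))
    (hfew : triCount A < ε ^ 3 / (64 * (H.index : ℝ) ^ 2) * ((2 : ℝ) ^ n) ^ 2) :
    ∃ H' ≤ H, meanEntG A H + (1 - Real.log 2) / 64 * ε ≤ meanEntG A H' ∧
      (H'.index : ℝ) ≤ ((2 : ℝ) ^ (2 * Real.logb (1 + ε ^ 2 / 16) (4 / ε))) ^ H.index := by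
  have hε₁ : ε ≤ 1 := le_one_of_mul_two_pow_le_card hcard hdisj
  have hindex : (H.index : ℝ) ≠ 0 := by exact_mod_cast AddSubgroup.index_ne_zero_of_finite
  have hfew' : triCount A < (ε / 4) ^ 3 * (Nat.card H : ℝ) ^ 2 := by
    rw [← natCard_mul_index H] at hfew
    convert hfew using 1
    field_simp
    norm_num
  have hL := one_le_logb hε hε₁
  have hshattered := le_natCard_shattered hε hε₁ hcard htri hdisj hsub hfew'
  obtain ⟨H', hH', hindex', hgain⟩ := exists_meanEntG_add_le A H (zero_le_one.trans hL)
    (α := 1 / 8) (β := 1 / 2) (by norm_num) (by norm_num) (by norm_num)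
  refine ⟨H', hH', hgain.trans' ?_, hindex'.trans (natCast_mul_pow_le hL _)⟩
  have hγ : 1 - 1 / 2 + ent (1 / 2) = (1 - Real.log 2) / 2 := by
    rw [ent, one_div, Real.log_inv]
    ring
  rw [← le_div_iff₀ (by positivity)] at hshattered
  rw [hγ]
  nlinarith [Real.log_two_lt_d9]

theorem main_lemma {n : ℕ} (A : Set (G n)) (ε : ℝ) (hε : 0 < ε)
    (𝒯 : Finset (G n × G n × G n)) (hcard : (𝒯.card : ℝ) = ε * 2 ^ n)
    (htri : ∀ p ∈ 𝒯, p.1 + p.2.1 + p.2.2 = 0)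
    (hdisj : ∀ p ∈ 𝒯, ∀ q ∈ 𝒯, p ≠ q → Disjoint (elems p) (elems q))
    (hunion : A = ⋃ p ∈ 𝒯, elems p)
    (H : AddSubgroup (G n)) (T : ℕ) (hT : T = H.index)
    (hfew : (triCount A : ℝ) < ε ^ 3 / (64 * (T : ℝ) ^ 2) * ((2 : ℝ) ^ n) ^ 2) :
    ∃ H' : AddSubgroup (G n), H' ≤ H ∧
      meanEntG A H + ε / 3600 ≤ meanEntG A H' ∧
      (H'.index : ℝ)
        ≤ ((2 : ℝ) ^ (2 * (Real.log (4 / ε) / Real.log (1 + ε ^ 2 / 16)))) ^ T := by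
  subst hT
  obtain ⟨H', hH', hgain, hindex⟩ := main_lemma_general A ε hε 𝒯 hcard.ge htri
    (fun p hp q hq hpq ↦ hdisj p hp q hq hpq)
    (fun p hp ↦ hunion ▸ Set.subset_biUnion_of_mem hp) H hfew
  exact ⟨H', hH', by nlinarith [Real.log_two_lt_d9], hindex⟩
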